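/- arXiv:1807.03226 — 9 statements merged into one kernel-verified Lean document; each statement's English description precedes it below -/
import Mathlib

section
/- Let L be a coframe, let (Lᵢ)_{i∈I} be a family of coframes each equipped with a convergence structure lim_{Lᵢ}, and let φᵢ : Lᵢ → L be coframe morphisms. Define lim_L(F) := ⋀_{i∈I} φᵢ(lim_{Lᵢ}(φᵢ⁻¹(F))) for every filter F on L. Then lim_L is a convergence structure on L, each φᵢ is continuous from (Lᵢ, lim_{Lᵢ}) to (L, lim_L), and lim_L is the coarsest such structure: every convergence structure lim′ on L making all the φᵢ continuous satisfies lim′(F) ≤ lim_L(F) for every filter F on L. -/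
/-! The pointwise infimum of the maps `F ↦ φᵢ(lim (φᵢ⁻¹ F))` is, by the universal property of
infima, the largest map below each of them, which is exactly what continuity of every `φᵢ` asks.
The remaining content is monotonicity: preservation of infima makes each `φᵢ` monotone and
compatible with `⊤` and `⊓`, so `φᵢ⁻¹` sends filters to filters and each of these maps
is monotone on filters. -/

/-- A filter on a lattice: a nonempty, upward-closed subset closed under binary meets. -/
def IsLatFilter {L : Type*} [Lattice L] (F : Set L) : Prop :=
  F.Nonempty ∧ (∀ x ∈ F, ∀ y : L, x ≤ y → y ∈ F) ∧ ∀ x ∈ F, ∀ y ∈ F, x ⊓ y ∈ F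

/-- A convergence structure on a lattice: a map on subsets, monotone on filters. -/
def ConvMono {L : Type*} [Lattice L] (lim : Set L → L) : Prop :=
  ∀ F G : Set L, IsLatFilter F → IsLatFilter G → F ⊆ G → lim F ≤ lim G

/-- A coframe morphism: preserves arbitrary infima and finite suprema. -/
def IsCoframeHom {L L' : Type*} [Order.Coframe L] [Order.Coframe L'] (φ : L → L') : Prop :=
  (∀ S : Set L, φ (sInf S) = sInf (φ '' S)) ∧ (φ ⊥ = ⊥) ∧
    ∀ x y : L, φ (x ⊔ y) = φ x ⊔ φ y

/-- Continuity of `φ : L → L′` with respect to convergence structures `limL` on `L`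
and `limL'` on `L′`: for every filter `F` on `L′`, `limL' F ≤ φ (limL (φ⁻¹ F))`. -/
def Contin {L L' : Type*} [Lattice L] [Lattice L']
    (limL : Set L → L) (limL' : Set L' → L') (φ : L → L') : Prop :=
  ∀ F : Set L', IsLatFilter F → limL' F ≤ φ (limL (φ ⁻¹' F))

theorem IsCoframeHom.map_inf {L L' : Type*} [Order.Coframe L] [Order.Coframe L'] {φ : L → L'}
    (h : IsCoframeHom φ) (x y : L) : φ (x ⊓ y) = φ x ⊓ φ y := by
  rw [← sInf_pair, h.1, Set.image_pair, sInf_pair]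

theorem IsCoframeHom.map_top {L L' : Type*} [Order.Coframe L] [Order.Coframe L'] {φ : L → L'}
    (h : IsCoframeHom φ) : φ ⊤ = ⊤ := by
  rw [← sInf_empty, h.1, Set.image_empty, sInf_empty]

theorem IsCoframeHom.monotone {L L' : Type*} [Order.Coframe L] [Order.Coframe L'] {φ : L → L'}
    (h : IsCoframeHom φ) : Monotone φ := fun x y hxy => by
  rw [← inf_eq_left, ← h.map_inf, inf_eq_left.mpr hxy]

/-- Nonemptiness of the preimage is witnessed by `⊤`. -/
theorem IsLatFilter.preimage {L L' : Type*} [Order.Coframe L] [Order.Coframe L'] {φ : L → L'}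
    (h : IsCoframeHom φ) {F : Set L'} (hF : IsLatFilter F) : IsLatFilter (φ ⁻¹' F) := by
  obtain ⟨⟨a, ha⟩, hup, hinf⟩ := hF
  refine ⟨⟨⊤, ?_⟩, fun x hx y hxy => hup _ hx _ (h.monotone hxy), fun x hx y hy => ?_⟩
  · rw [Set.mem_preimage, h.map_top]
    exact hup a ha ⊤ le_top
  · rw [Set.mem_preimage, h.map_inf]
    exact hinf _ hx _ hy

theorem stmt5 {I : Type*} {L : Type*} [Order.Coframe L]
    {Li : I → Type*} [∀ i, Order.Coframe (Li i)]
    (limi : ∀ i, Set (Li i) → Li i) (hlimi : ∀ i, ConvMono (limi i))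
    (φ : ∀ i, Li i → L) (hφ : ∀ i, IsCoframeHom (φ i)) :
    -- lim_L F := ⨅ i, φ i (lim_{L i} (φ i ⁻¹' F)) is a convergence structure on L,
    ConvMono (fun F : Set L => ⨅ i, φ i (limi i (φ i ⁻¹' F))) ∧
    -- each φ i is continuous,
    (∀ i, Contin (limi i) (fun F : Set L => ⨅ j, φ j (limi j (φ j ⁻¹' F))) (φ i)) ∧
    -- and it is the coarsest such convergence structure on L
    (∀ lim' : Set L → L, ConvMono lim' →
      (∀ i, Contin (limi i) lim' (φ i)) →
      ∀ F : Set L, IsLatFilter F → lim' F ≤ ⨅ i, φ i (limi i (φ i ⁻¹' F))) := by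
  refine ⟨fun F G hF hG hFG => ?_, fun i F _ => iInf_le _ i,
    fun lim' _ hc F hF => le_iInf fun i => hc i F hF⟩
  exact iInf_mono fun i => (hφ i).monotone
    (hlimi i _ _ (hF.preimage (hφ i)) (hG.preimage (hφ i)) (Set.preimage_mono hFG))
end

section
/- Let L be a coframe, let (Lᵢ)_{i∈I} be a family of coframes each equipped with a convergence structure lim_{Lᵢ}, and let φᵢ : Lᵢ → L be coframe morphisms. If each lim_{Lᵢ} is classical, then the convergence structure lim_L(F) := ⋀_{i∈I} φᵢ(lim_{Lᵢ}(φᵢ⁻¹(F))) on L is classical. -/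
/-- An element `a` of a bounded lattice is complemented if it has a complement. -/
def Cmpl {L : Type*} [Lattice L] [BoundedOrder L] (a : L) : Prop :=
  ∃ b : L, a ⊔ b = ⊤ ∧ a ⊓ b = ⊥

/-- A convergence structure is classical if any two filters containing the same
complemented elements have the same limit. -/
def ClassicalConv {L : Type*} [Lattice L] [BoundedOrder L] (lim : Set L → L) : Prop :=
  ∀ F G : Set L, IsLatFilter F → IsLatFilter G →
    (∀ a : L, Cmpl a → (a ∈ F ↔ a ∈ G)) → lim F = lim G

namespace IsCoframeHom

variable {L L' : Type*} [Order.Coframe L] [Order.Coframe L'] {φ : L → L'}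

theorem map_top' (h : IsCoframeHom φ) : φ ⊤ = ⊤ := by
  simpa using h.1 ∅

theorem map_inf' (h : IsCoframeHom φ) (x y : L) : φ (x ⊓ y) = φ x ⊓ φ y := by
  simpa [Set.image_pair, sInf_pair] using h.1 {x, y}

theorem monotone' (h : IsCoframeHom φ) : Monotone φ := fun x y hxy => by
  rw [← inf_eq_left, ← h.map_inf', inf_eq_left.mpr hxy]

theorem isLatFilter_preimage (h : IsCoframeHom φ) {F : Set L'} (hF : IsLatFilter F) :
    IsLatFilter (φ ⁻¹' F) := by
  obtain ⟨⟨z, hz⟩, hup, hinf⟩ := hF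
  refine ⟨⟨⊤, hup z hz _ (h.map_top' ▸ le_top)⟩, fun x hx y hxy => hup _ hx _ (h.monotone' hxy),
    fun x hx y hy => ?_⟩
  rw [Set.mem_preimage, h.map_inf']
  exact hinf _ hx _ hy

theorem cmpl_map (h : IsCoframeHom φ) {a : L} : Cmpl a → Cmpl (φ a) := by
  rintro ⟨b, h1, h2⟩
  exact ⟨φ b, by rw [← h.2.2, h1, h.map_top'], by rw [← h.map_inf', h2, h.2.1]⟩

end IsCoframeHom

/-- If each `lim_{L i}` is classical, then so is the initial/coarsest structure
`lim_L F = ⨅ i, φ i (lim_{L i} (φ i ⁻¹' F))` on `L`. -/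
theorem stmt7 {I : Type*} {L : Type*} [Order.Coframe L]
    {Li : I → Type*} [∀ i, Order.Coframe (Li i)]
    (limi : ∀ i, Set (Li i) → Li i) (hlimi : ∀ i, ConvMono (limi i))
    (hclass : ∀ i, ClassicalConv (limi i))
    (φ : ∀ i, Li i → L) (hφ : ∀ i, IsCoframeHom (φ i)) :
    ClassicalConv (fun F : Set L => ⨅ i, φ i (limi i (φ i ⁻¹' F))) := by
  intro F G hF hG hFG
  refine iInf_congr fun i => congrArg (φ i) ?_
  exact hclass i _ _ ((hφ i).isLatFilter_preimage hF) ((hφ i).isLatFilter_preimage hG)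
    fun a ha => hFG _ ((hφ i).cmpl_map ha)
end

section
/- Let L be a coframe (in particular a distributive complete lattice) equipped with a convergence structure lim. The raw adherence operator adh⁰ : L → L preserves finite suprema: adh⁰(ℓ₁ ⊔ ⋯ ⊔ ℓₙ) = adh⁰(ℓ₁) ⊔ ⋯ ⊔ adh⁰(ℓₙ) for every finite family ℓ₁, …, ℓₙ in L (in particular adh⁰(⊥) = ⊥); in particular adh⁰ is monotone. -/
/-!
The point is that grills of filters are prime: by distributivity, if `x ⊓ a = ⊥` and `y ⊓ b = ⊥`
with `x, y` in a filter `F`, then `x ⊓ y ∈ F` is disjoint from `a ⊔ b` (`mem_grill_sup`). Hence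
every filter contributing to `adh⁰ (a ⊔ b)` already contributes to `adh⁰ a` or to `adh⁰ b`, giving
`adh⁰ (a ⊔ b) ≤ adh⁰ a ⊔ adh⁰ b`; the reverse inequality is monotonicity, as grills are
upward closed. No filter has `⊥` in its grill, so `adh⁰ ⊥` is an empty supremum, and
the finite case follows by induction.
-/

/-- The grill of a subset `A` of a lattice with bottom:
`A^# = {ℓ | ∀ a ∈ A, a ⊓ ℓ ≠ ⊥}`. -/
def grill {L : Type*} [Lattice L] [OrderBot L] (A : Set L) : Set L :=
  {l | ∀ a ∈ A, a ⊓ l ≠ ⊥}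

/-- The raw adherence of a convergence structure:
`adh⁰ ℓ = ⋁ {lim F | F a filter with ℓ ∈ F^#}`. -/
def adh0 {L : Type*} [Order.Coframe L] (lim : Set L → L) (l : L) : L :=
  sSup {x | ∃ F : Set L, IsLatFilter F ∧ l ∈ grill F ∧ x = lim F}

/-- The grill of a filter on a distributive lattice is prime. -/
theorem mem_grill_sup {L : Type*} [Order.Coframe L] {F : Set L} (hF : IsLatFilter F) {a b : L}
    (h : a ⊔ b ∈ grill F) : a ∈ grill F ∨ b ∈ grill F := by
  by_contra! hab
  simp only [grill, Set.mem_ofPred_eq, not_forall, not_not] at hab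
  obtain ⟨⟨x, hx, hxa⟩, y, hy, hyb⟩ := hab
  refine h (x ⊓ y) (hF.2.2 x hx y hy) (le_bot_iff.mp ?_)
  rw [inf_sup_left]
  exact sup_le ((inf_le_inf_right a inf_le_left).trans hxa.le)
    ((inf_le_inf_right b inf_le_right).trans hyb.le)

theorem adh0_mono {L : Type*} [Order.Coframe L] (lim : Set L → L) : Monotone (adh0 lim) := by
  intro a b hab
  refine sSup_le_sSup ?_
  rintro _ ⟨F, hF, ha, rfl⟩
  exact ⟨F, hF, fun x hx hxb => ha x hx (le_bot_iff.mp ((inf_le_inf_left x hab).trans hxb.le)), rfl⟩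

theorem adh0_bot {L : Type*} [Order.Coframe L] (lim : Set L → L) : adh0 lim ⊥ = ⊥ := by
  refine le_bot_iff.mp (sSup_le ?_)
  rintro _ ⟨F, ⟨⟨x, hx⟩, _⟩, h, rfl⟩
  exact absurd (inf_bot_eq x) (h x hx)

theorem adh0_sup {L : Type*} [Order.Coframe L] (lim : Set L → L) (a b : L) :
    adh0 lim (a ⊔ b) = adh0 lim a ⊔ adh0 lim b := by
  refine le_antisymm (sSup_le ?_) ((adh0_mono lim).le_map_sup a b)
  rintro _ ⟨F, hF, h, rfl⟩
  rcases mem_grill_sup hF h with h | h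
  · exact le_sup_of_le_left (le_sSup ⟨F, hF, h, rfl⟩)
  · exact le_sup_of_le_right (le_sSup ⟨F, hF, h, rfl⟩)

/-- On a coframe, the raw adherence operator preserves finite suprema
(in particular `adh⁰ ⊥ = ⊥`), and in particular is monotone. -/
theorem stmt8 {L : Type*} [Order.Coframe L] (lim : Set L → L) (hlim : ConvMono lim) :
    (∀ (n : ℕ) (l : Fin n → L),
      adh0 lim (Finset.univ.sup l) = Finset.univ.sup fun i => adh0 lim (l i)) ∧
    adh0 lim ⊥ = ⊥ ∧
    Monotone (adh0 lim) := by
  exact ⟨fun _ l => Finset.apply_sup_eq_sup_comp (adh0 lim) (adh0_sup lim) (adh0_bot lim),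
    adh0_bot lim, adh0_mono lim⟩
end

section
/- Let L be a coframe. Every adherence structure ν on L preserves all finite suprema: ν(ℓ₁ ⊔ ⋯ ⊔ ℓₙ) = ν(ℓ₁) ⊔ ⋯ ⊔ ν(ℓₙ) for every finite family ℓ₁, …, ℓₙ of elements of L (in particular ν(⊥) = ⊥). -/
/-- An adherence structure on a coframe: monotone, preserves finite suprema of
complemented elements, and `ν ℓ = ⋀ {ν a | a complemented, a ≥ ℓ}`. -/
def IsAdhStruct {L : Type*} [Order.Coframe L] (ν : L → L) : Prop :=
  Monotone ν ∧ (ν ⊥ = ⊥) ∧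
    (∀ a b : L, Cmpl a → Cmpl b → ν (a ⊔ b) = ν a ⊔ ν b) ∧
    ∀ l : L, ν l = sInf {x | ∃ a : L, Cmpl a ∧ l ≤ a ∧ x = ν a}

/-- Binary case: writing both values as infima over complemented upper bounds and
distributing, `ν l ⊔ ν m = ⨅ (ν a ⊔ ν b) = ⨅ ν (a ⊔ b)`, which lies above `ν (l ⊔ m)`. -/
theorem IsAdhStruct.map_sup {L : Type*} [Order.Coframe L] {ν : L → L} (hν : IsAdhStruct ν)
    (l m : L) : ν (l ⊔ m) = ν l ⊔ ν m := by
  obtain ⟨hmono, -, hsup, hinf⟩ := hν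
  apply le_antisymm _ (hmono.le_map_sup l m)
  rw [hinf l, hinf m, sInf_sup_sInf]
  refine le_iInf₂ ?_
  rintro ⟨_, _⟩ ⟨⟨a, ha, hla, rfl⟩, ⟨b, hb, hmb, rfl⟩⟩
  exact (hmono (sup_le_sup hla hmb)).trans_eq (hsup a b ha hb)

/-- Every adherence structure on a coframe preserves all finite suprema
(in particular `ν ⊥ = ⊥`). -/
theorem stmt14 {L : Type*} [Order.Coframe L] (ν : L → L) (hν : IsAdhStruct ν) :
    ∀ (n : ℕ) (l : Fin n → L),
      ν (Finset.univ.sup l) = Finset.univ.sup fun i => ν (l i) := by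
  intro n l
  exact Finset.apply_sup_eq_sup_comp ν hν.map_sup hν.2.1
end

section
/- Let L be a coframe. (1) Every adherence structure ν on L defines a classical pretopological convergence structure lim_ν by lim_ν(F) := ⋀{ν(a) | a complemented, a ∈ F^#}: lim_ν is monotone in F, satisfies lim_ν(⋂ᵢ Fᵢ) = ⋀ᵢ lim_ν(Fᵢ) for every family of filters, and any two filters containing the same complemented elements have the same lim_ν. (2) For every convergence structure lim on L and every filter F on L, lim(F) ≤ lim_{adh_lim}(F), where adh_lim is the adherence of lim. (3) For every adherence structure ν on L and every ℓ ∈ L, adh_{lim_ν}(ℓ) ≤ ν(ℓ). -/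
/-- The adherence of a convergence structure:
`adh ℓ = ⋀ {adh⁰ a | a complemented, a ≥ ℓ}`. -/
def adh {L : Type*} [Order.Coframe L] (lim : Set L → L) (l : L) : L :=
  sInf {x | ∃ a : L, Cmpl a ∧ l ≤ a ∧ x = adh0 lim a}

/-- The convergence structure associated with an adherence operator `ν`:
`lim_ν F = ⋀ {ν a | a complemented, a ∈ F^#}`. -/
def limOfNu {L : Type*} [Order.Coframe L] (ν : L → L) (F : Set L) : L :=
  sInf {x | ∃ a : L, Cmpl a ∧ a ∈ grill F ∧ x = ν a}

theorem mem_grill_iff_of_compl {L : Type*} [Order.Coframe L] {F : Set L}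
    (hF : ∀ x ∈ F, ∀ y : L, x ≤ y → y ∈ F) {a b : L} (h₁ : a ⊔ b = ⊤) (h₂ : a ⊓ b = ⊥) :
    a ∈ grill F ↔ b ∉ F := by
  constructor
  · intro ha hb
    exact ha b hb (by rw [inf_comm, h₂])
  · intro hb f hf hfa
    exact hb (hF f hf b ((IsCompl.of_eq h₂ h₁).inf_left_eq_bot_iff.mp hfa))

theorem grill_anti {L : Type*} [Lattice L] [OrderBot L] {F G : Set L} (h : F ⊆ G) :
    grill G ⊆ grill F :=
  fun _ ha f hf => ha f (h hf)

theorem grill_upward {L : Type*} [Lattice L] [OrderBot L] {F : Set L} {a c : L}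
    (ha : a ∈ grill F) (hac : a ≤ c) : c ∈ grill F :=
  fun f hf h => ha f hf (le_bot_iff.mp (h ▸ inf_le_inf_left f hac))

theorem limOfNu_mono {L : Type*} [Order.Coframe L] (ν : L → L) {F G : Set L} (h : F ⊆ G) :
    limOfNu ν F ≤ limOfNu ν G := by
  apply sInf_le_sInf
  rintro x ⟨a, hc, ha, rfl⟩
  exact ⟨a, hc, grill_anti h ha, rfl⟩

theorem limOfNu_sInter {L : Type*} [Order.Coframe L] (ν : L → L) (Fs : Set (Set L))
    (hFs : ∀ F ∈ Fs, IsLatFilter F) :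
    limOfNu ν (⋂₀ Fs) = ⨅ F ∈ Fs, limOfNu ν F := by
  apply le_antisymm
  · exact le_iInf₂ fun F hF => limOfNu_mono ν (Set.sInter_subset_of_mem hF)
  · apply le_sInf
    rintro x ⟨a, hc, ha, rfl⟩
    obtain ⟨b, h₁, h₂⟩ := hc
    have hup : ∀ x ∈ ⋂₀ Fs, ∀ y : L, x ≤ y → y ∈ ⋂₀ Fs :=
      fun x hx y hxy F hF => (hFs F hF).2.1 x (hx F hF) y hxy
    have hb := (mem_grill_iff_of_compl hup h₁ h₂).mp ha
    rw [Set.mem_sInter] at hb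
    push Not at hb
    obtain ⟨F, hF, hbF⟩ := hb
    exact (iInf₂_le F hF).trans
      (sInf_le ⟨a, ⟨b, h₁, h₂⟩, (mem_grill_iff_of_compl (hFs F hF).2.1 h₁ h₂).mpr hbF, rfl⟩)

theorem limOfNu_le_of_cmpl {L : Type*} [Order.Coframe L] (ν : L → L) {F G : Set L}
    (hF : IsLatFilter F) (hG : IsLatFilter G) (h : ∀ a : L, Cmpl a → a ∈ F → a ∈ G) :
    limOfNu ν F ≤ limOfNu ν G := by
  apply sInf_le_sInf
  rintro x ⟨a, ⟨b, h₁, h₂⟩, ha, rfl⟩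
  have hb := (mem_grill_iff_of_compl hG.2.1 h₁ h₂).mp ha
  have hcb : Cmpl b := ⟨a, by rw [sup_comm, h₁], by rw [inf_comm, h₂]⟩
  exact ⟨a, ⟨b, h₁, h₂⟩,
    (mem_grill_iff_of_compl hF.2.1 h₁ h₂).mpr fun hbF => hb (h b hcb hbF), rfl⟩

theorem stmt15 {L : Type*} [Order.Coframe L] :
    -- (1) for every adherence structure ν, lim_ν is a classical pretopological
    -- convergence structure
    (∀ ν : L → L, IsAdhStruct ν →
      ConvMono (limOfNu ν) ∧
      (∀ Fs : Set (Set L), (∀ F ∈ Fs, IsLatFilter F) →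
        limOfNu ν (⋂₀ Fs) = ⨅ F ∈ Fs, limOfNu ν F) ∧
      (∀ F G : Set L, IsLatFilter F → IsLatFilter G →
        (∀ a : L, Cmpl a → (a ∈ F ↔ a ∈ G)) → limOfNu ν F = limOfNu ν G)) ∧
    -- (2) lim F ≤ lim_{adh_lim} F for every convergence structure lim and filter F
    (∀ lim : Set L → L, ConvMono lim →
      ∀ F : Set L, IsLatFilter F → lim F ≤ limOfNu (adh lim) F) ∧
    -- (3) adh_{lim_ν} ℓ ≤ ν ℓ for every adherence structure ν
    (∀ ν : L → L, IsAdhStruct ν → ∀ l : L, adh (limOfNu ν) l ≤ ν l) := by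
  refine ⟨fun ν _ => ⟨fun F G _ _ h => limOfNu_mono ν h, limOfNu_sInter ν, fun F G hF hG h =>
    le_antisymm (limOfNu_le_of_cmpl ν hF hG fun a ha => (h a ha).mp)
      (limOfNu_le_of_cmpl ν hG hF fun a ha => (h a ha).mpr)⟩, ?_, ?_⟩
  · intro lim _ F hF
    apply le_sInf
    rintro x ⟨a, -, ha, rfl⟩
    apply le_sInf
    rintro x ⟨c, -, hac, rfl⟩
    exact le_sSup ⟨F, hF, grill_upward ha hac, rfl⟩
  · intro ν hν l
    rw [hν.2.2.2 l]
    apply le_sInf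
    rintro x ⟨a, hc, hla, rfl⟩
    refine le_trans (b := adh0 (limOfNu ν) a) (sInf_le ⟨a, hc, hla, rfl⟩) (sSup_le ?_)
    rintro x ⟨F, -, ha, rfl⟩
    exact sInf_le ⟨a, hc, ha, rfl⟩
end

section
/- Let L be a spatial coframe (every element of L is a supremum of join-prime elements). Then for every adherence structure ν on L, the adherence of the associated convergence structure lim_ν recovers ν: adh_{lim_ν}(ℓ) = ν(ℓ) for every ℓ ∈ L. -/
/-- A join-prime element: `p ≠ ⊥` and `p ≤ a ⊔ b` implies `p ≤ a` or `p ≤ b`. -/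
def JoinPrime {L : Type*} [Lattice L] [OrderBot L] (p : L) : Prop :=
  p ≠ ⊥ ∧ ∀ a b : L, p ≤ a ⊔ b → p ≤ a ∨ p ≤ b

/-!
The point is that `adh0 (limOfNu ν) a = ν a` for complemented `a`; taking infima over the
complemented `a ≥ ℓ` then gives the theorem, by the regularity axiom on `ν`.

If `a` is complemented and lies in the grill of `F`, then `ν a` is one of the elements whose infimum
is `limOfNu ν F`, so `adh0 (limOfNu ν) a ≤ ν a`. Conversely, by spatiality it is enough to show that
every join-prime `p ≤ ν a` lies below `limOfNu ν F` for some filter `F` with `a` in its grill. Since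
`p` is join-prime and `ν` preserves finite suprema of complemented elements, the complemented `b`
with `¬ p ≤ ν b` form an ideal. The filter generated by the complements of its members
(`adhFilter ν p`) works, for all such `a` simultaneously.
-/

/-- The filter generated by the complements of those complemented `b` with `¬ p ≤ ν b`. The condition
`bᶜ ≤ x` is written as `x ⊔ b = ⊤`, which avoids choosing complements. -/
def adhFilter {L : Type*} [Order.Coframe L] (ν : L → L) (p : L) : Set L :=
  {x | ∃ b : L, Cmpl b ∧ ¬ p ≤ ν b ∧ x ⊔ b = ⊤}

theorem Cmpl.sup {L : Type*} [Order.Coframe L] {a b : L} (ha : Cmpl a) (hb : Cmpl b) :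
    Cmpl (a ⊔ b) := by
  obtain ⟨a', ha1, ha2⟩ := ha
  obtain ⟨b', hb1, hb2⟩ := hb
  exact ⟨a' ⊓ b', ((IsCompl.of_eq ha2 ha1).sup_inf (IsCompl.of_eq hb2 hb1)).sup_eq_top,
    ((IsCompl.of_eq ha2 ha1).sup_inf (IsCompl.of_eq hb2 hb1)).inf_eq_bot⟩

theorem isLatFilter_adhFilter {L : Type*} [Order.Coframe L] {ν : L → L} (hν : IsAdhStruct ν)
    {p : L} (hp : JoinPrime p) : IsLatFilter (adhFilter ν p) := by
  obtain ⟨-, hbot, hsup, -⟩ := hν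
  refine ⟨⟨⊤, ⊥, ⟨⊤, by simp, by simp⟩, ?_, by simp⟩, ?_, ?_⟩
  · rw [hbot, le_bot_iff]
    exact hp.1
  · rintro x ⟨b, hb, hpb, hx⟩ y hxy
    exact ⟨b, hb, hpb, top_le_iff.1 (hx ▸ sup_le_sup_right hxy b)⟩
  · rintro x ⟨b, hb, hpb, hx⟩ y ⟨c, hc, hpc, hy⟩
    refine ⟨b ⊔ c, hb.sup hc, ?_, ?_⟩
    · rw [hsup b c hb hc]
      exact fun h => (hp.2 _ _ h).elim hpb hpc
    · rw [sup_inf_right, ← sup_assoc, hx, sup_left_comm, hy]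
      simp

theorem mem_grill_adhFilter {L : Type*} [Order.Coframe L] {ν : L → L} (hmono : Monotone ν)
    {p a : L} (hpa : p ≤ ν a) : a ∈ grill (adhFilter ν p) := by
  rintro x ⟨b, -, hpb, hx⟩ hxa
  -- `a` is disjoint from `x` and `x ⊔ b = ⊤`, so `a ≤ b`, which contradicts `¬ p ≤ ν b`.
  have hab : a ≤ b :=
    (disjoint_iff.2 hxa).symm.le_of_codisjoint (codisjoint_iff.2 hx)
  exact hpb (hpa.trans (hmono hab))

theorem le_limOfNu_adhFilter {L : Type*} [Order.Coframe L] (ν : L → L) (p : L) :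
    p ≤ limOfNu ν (adhFilter ν p) := by
  refine le_sInf ?_
  rintro _ ⟨c, hc, hcF, rfl⟩
  by_contra hpc
  -- Otherwise the complement of `c` belongs to the filter, so `c` cannot be in the grill.
  obtain ⟨c', h1, h2⟩ := id hc
  exact hcF c' ⟨c, hc, hpc, by rw [sup_comm, h1]⟩ (by rw [inf_comm, h2])

/-- The raw adherence already recovers `ν` on complemented elements. -/
theorem adh0_limOfNu {L : Type*} [Order.Coframe L]
    (hspatial : ∀ l : L, l = sSup {p | JoinPrime p ∧ p ≤ l})
    {ν : L → L} (hν : IsAdhStruct ν) {a : L} (ha : Cmpl a) :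
    adh0 (limOfNu ν) a = ν a := by
  apply le_antisymm
  · refine sSup_le ?_
    rintro _ ⟨F, -, haF, rfl⟩
    exact sInf_le ⟨a, ha, haF, rfl⟩
  · rw [hspatial (ν a)]
    refine sSup_le ?_
    rintro p ⟨hp, hpa⟩
    exact (le_limOfNu_adhFilter ν p).trans
      (le_sSup ⟨_, isLatFilter_adhFilter hν hp, mem_grill_adhFilter hν.1 hpa, rfl⟩)

/-- On a spatial coframe (every element is a supremum of join-primes), the adherence of
`lim_ν` recovers `ν`, for every adherence structure `ν`. -/
theorem stmt16 {L : Type*} [Order.Coframe L]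
    (hspatial : ∀ l : L, l = sSup {p | JoinPrime p ∧ p ≤ l})
    (ν : L → L) (hν : IsAdhStruct ν) :
    ∀ l : L, adh (limOfNu ν) l = ν l := by
  intro l
  rw [hν.2.2.2 l, adh]
  congr 1
  ext x
  refine exists_congr fun a => and_congr_right fun ha => ?_
  rw [adh0_limOfNu hspatial hν ha]
end

section
/- Let L be a prime-continuous coframe (every element is the supremum of the elements way-way-below it). Then for every classical pretopological convergence structure lim on L, lim = lim_{adh_lim}; that is, for every filter F on L, lim(F) = ⋀{adh_lim(a) | a complemented, a ∈ F^#}. -/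
/-- `l` is way-way-below `l'`: every subset whose supremum dominates `l'` contains an
element above `l`. -/
def WayWayBelow {L : Type*} [CompleteLattice L] (l l' : L) : Prop :=
  ∀ S : Set L, l' ≤ sSup S → ∃ s ∈ S, l ≤ s

/-- The upward closure of the set of complemented elements of `G`. -/
def cmplPart {L : Type*} [Lattice L] [BoundedOrder L] (G : Set L) : Set L :=
  {x | ∃ c ∈ G, Cmpl c ∧ c ≤ x}

theorem cmpl_iff_exists_isCompl {L : Type*} [Lattice L] [BoundedOrder L] {a : L} :
    Cmpl a ↔ ∃ b, IsCompl a b :=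
  ⟨fun ⟨b, h1, h2⟩ => ⟨b, IsCompl.of_eq h2 h1⟩,
    fun ⟨b, h⟩ => ⟨b, h.sup_eq_top, h.inf_eq_bot⟩⟩

theorem isLatFilter_cmplPart {L : Type*} [Order.Coframe L] {G : Set L} (hG : IsLatFilter G) :
    IsLatFilter (cmplPart G) := by
  obtain ⟨⟨g, hg⟩, hup, hinf⟩ := hG
  refine ⟨⟨⊤, ⊤, hup g hg ⊤ le_top, cmpl_iff_exists_isCompl.2 ⟨⊥, isCompl_top_bot⟩, le_rfl⟩, ?_, ?_⟩
  · rintro x ⟨c, hc, hcc, hcx⟩ y hxy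
    exact ⟨c, hc, hcc, hcx.trans hxy⟩
  · rintro x ⟨c, hc, hcc, hcx⟩ y ⟨d, hd, hdd, hdy⟩
    obtain ⟨c', hc'⟩ := cmpl_iff_exists_isCompl.1 hcc
    obtain ⟨d', hd'⟩ := cmpl_iff_exists_isCompl.1 hdd
    exact ⟨c ⊓ d, hinf c hc d hd, cmpl_iff_exists_isCompl.2 ⟨_, hc'.inf_sup hd'⟩,
      inf_le_inf hcx hdy⟩

theorem isLatFilter_sInter {L : Type*} [Order.Coframe L] {Fs : Set (Set L)}
    (h : ∀ F ∈ Fs, IsLatFilter F) : IsLatFilter (⋂₀ Fs) := by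
  refine ⟨⟨⊤, fun F hF => ?_⟩, fun x hx y hxy F hF => (h F hF).2.1 x (hx F hF) y hxy,
    fun x hx y hy F hF => (h F hF).2.2 x (hx F hF) y (hy F hF)⟩
  obtain ⟨g, hg⟩ := (h F hF).1
  exact (h F hF).2.1 g hg ⊤ le_top

/-- On a prime-continuous coframe, every classical pretopological convergence structure
satisfies `lim = lim_{adh_lim}`. -/
theorem stmt17 {L : Type*} [Order.Coframe L]
    (hpc : ∀ l : L, l = sSup {m | WayWayBelow m l})
    (lim : Set L → L) (hmono : ConvMono lim)
    (hpretop : ∀ Fs : Set (Set L), (∀ F ∈ Fs, IsLatFilter F) →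
      lim (⋂₀ Fs) = ⨅ F ∈ Fs, lim F)
    (hclassical : ∀ F G : Set L, IsLatFilter F → IsLatFilter G →
      (∀ a : L, Cmpl a → (a ∈ F ↔ a ∈ G)) → lim F = lim G) :
    ∀ F : Set L, IsLatFilter F → lim F = limOfNu (adh lim) F := by
  intro F hF
  apply le_antisymm
  · refine le_sInf ?_
    rintro _ ⟨a, -, haF, rfl⟩
    refine le_sInf ?_
    rintro _ ⟨b, -, hab, rfl⟩
    refine le_sSup ⟨F, hF, fun f hf h0 => haF f hf ?_, rfl⟩
    exact le_bot_iff.1 ((inf_le_inf_left f hab).trans h0.le)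
  · rw [hpc (limOfNu (adh lim) F)]
    refine sSup_le fun m hm => ?_
    let Fs : Set (Set L) := {H | IsLatFilter H ∧ m ≤ lim H}
    have hFs : ∀ H ∈ Fs, IsLatFilter H := fun H hH => hH.1
    have hG : IsLatFilter (⋂₀ Fs) := isLatFilter_sInter hFs
    have hmG : m ≤ lim (⋂₀ Fs) := by
      rw [hpretop Fs hFs]
      exact le_iInf₂ fun H hH => hH.2
    have key : ∀ c ∈ ⋂₀ Fs, Cmpl c → c ∈ F := by
      intro c hc hcc
      obtain ⟨d, hcd⟩ := cmpl_iff_exists_isCompl.1 hcc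
      by_contra hcF
      have hdF : d ∈ grill F := fun f hf h0 =>
        hcF (hF.2.1 f hf c (hcd.disjoint_right_iff.1 (disjoint_iff.2 h0)))
      have hle : limOfNu (adh lim) F ≤ adh0 lim d := by
        have hd : Cmpl d := cmpl_iff_exists_isCompl.2 ⟨c, hcd.symm⟩
        have h1 : limOfNu (adh lim) F ≤ adh lim d := sInf_le ⟨d, hd, hdF, rfl⟩
        exact h1.trans (sInf_le ⟨d, hd, le_rfl, rfl⟩)
      obtain ⟨_, ⟨H, hH, hdH, rfl⟩, hmH⟩ := hm _ hle
      exact hdH c (hc H ⟨hH, hmH⟩) hcd.inf_eq_bot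
    have hG' := isLatFilter_cmplPart hG
    calc m ≤ lim (⋂₀ Fs) := hmG
      _ = lim (cmplPart (⋂₀ Fs)) := hclassical _ _ hG hG' fun a ha =>
          ⟨fun h => ⟨a, h, ha, le_rfl⟩, fun ⟨c, hc, _, hca⟩ => hG.2.1 c hc a hca⟩
      _ ≤ lim F := hmono _ _ hG' hF fun x ⟨c, hc, hcc, hcx⟩ =>
          hF.2.1 c (key c hc hcc) x hcx
end

section
/- Let L be a coframe with an adherence structure ν; call c ∈ L quasi-closed if ν(c) ≤ c, and closed if c is both complemented and quasi-closed. Then: (1) the quasi-closed elements form a subcoframe of L, i.e., they are closed under arbitrary infima and under finite suprema; (2) the closed elements form a sublattice of L, i.e., they are closed under finite infima and finite suprema. -/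
/-- `c` is quasi-closed for `ν` if `ν c ≤ c`; `c` is closed if moreover complemented. -/
def QuasiClosed {L : Type*} [Order.Coframe L] (ν : L → L) (c : L) : Prop :=
  ν c ≤ c

theorem cmpl_iff_isComplemented {L : Type*} [Lattice L] [BoundedOrder L] {a : L} :
    Cmpl a ↔ IsComplemented a :=
  ⟨fun ⟨b, h₁, h₂⟩ => ⟨b, disjoint_iff.2 h₂, codisjoint_iff.2 h₁⟩,
    fun ⟨b, h⟩ => ⟨b, h.sup_eq_top, h.inf_eq_bot⟩⟩

/-- For complemented `a ≥ c` and `b ≥ d`, the join `a ⊔ b` is a complemented upper bound of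
`c ⊔ d` with `ν (a ⊔ b) = ν a ⊔ ν b`; the coframe law then gives the infimum over all `a, b`. -/
theorem IsAdhStruct.map_sup_le {L : Type*} [Order.Coframe L] {ν : L → L}
    (hν : IsAdhStruct ν) (c d : L) : ν (c ⊔ d) ≤ ν c ⊔ ν d := by
  obtain ⟨hmono, -, hsup, hinf⟩ := hν
  rw [hinf c, hinf d, sInf_sup_sInf]
  refine le_iInf₂ ?_
  rintro ⟨_, _⟩ ⟨⟨a, ha, hca, rfl⟩, ⟨b, hb, hdb, rfl⟩⟩
  exact (hmono (sup_le_sup hca hdb)).trans (hsup a b ha hb).le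

theorem stmt18 {L : Type*} [Order.Coframe L] (ν : L → L) (hν : IsAdhStruct ν) :
    -- (1) the quasi-closed elements form a subcoframe:
    -- closed under arbitrary infima and finite suprema
    ((∀ S : Set L, (∀ c ∈ S, QuasiClosed ν c) → QuasiClosed ν (sInf S)) ∧
     QuasiClosed ν (⊥ : L) ∧
     (∀ c d : L, QuasiClosed ν c → QuasiClosed ν d → QuasiClosed ν (c ⊔ d))) ∧
    -- (2) the closed elements form a sublattice:
    -- closed under finite infima and finite suprema
    ((Cmpl (⊤ : L) ∧ QuasiClosed ν (⊤ : L)) ∧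
     (∀ c d : L, Cmpl c → QuasiClosed ν c → Cmpl d → QuasiClosed ν d →
       Cmpl (c ⊓ d) ∧ QuasiClosed ν (c ⊓ d)) ∧
     (Cmpl (⊥ : L) ∧ QuasiClosed ν (⊥ : L)) ∧
     (∀ c d : L, Cmpl c → QuasiClosed ν c → Cmpl d → QuasiClosed ν d →
       Cmpl (c ⊔ d) ∧ QuasiClosed ν (c ⊔ d))) := by
  have hbot : QuasiClosed ν (⊥ : L) := hν.2.1.le
  have hsup : ∀ c d : L, QuasiClosed ν c → QuasiClosed ν d → QuasiClosed ν (c ⊔ d) :=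
    fun c d hc hd => (hν.map_sup_le c d).trans (sup_le_sup hc hd)
  refine ⟨⟨fun S hS => le_sInf fun c hc => (hν.1 (sInf_le hc)).trans (hS c hc), hbot, hsup⟩,
    ⟨cmpl_iff_isComplemented.2 isComplemented_top, le_top⟩, fun c d hc hc' hd hd' => ⟨?_, ?_⟩,
    ⟨cmpl_iff_isComplemented.2 isComplemented_bot, hbot⟩,
    fun c d hc hc' hd hd' => ⟨?_, hsup c d hc' hd'⟩⟩
  · rw [cmpl_iff_isComplemented] at *
    exact hc.inf hd
  · exact le_inf ((hν.1 inf_le_left).trans hc') ((hν.1 inf_le_right).trans hd')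
  · rw [cmpl_iff_isComplemented] at *
    exact hc.sup hd
end

section
/- Let L be a coframe and C a topological structure on L, i.e., a sublattice of L consisting of complemented elements (containing ⊥ and ⊤ and closed under finite suprema and finite infima). Define ν_C(ℓ) := ⋀{c ∈ C | c ≥ ℓ}. Then ν_C is an adherence structure on L (monotone, preserving finite suprema of complemented elements, and with ν_C(ℓ) = ⋀{ν_C(a) | a complemented, a ≥ ℓ}); moreover: (1) ν_C is centered, i.e., ℓ ≤ ν_C(ℓ) for every ℓ; (2) for every ℓ ∈ L and c ∈ C, c ≥ ν_C(ℓ) if and only if c ≥ ℓ; (3) ν_C(c) = c for every c ∈ C; (4) ν_C is idempotent, i.e., ν_C(ν_C(ℓ)) = ν_C(ℓ) for every ℓ. -/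
/-- The operator associated with a topological structure `C`:
`ν_C ℓ = ⋀ {c ∈ C | c ≥ ℓ}`. -/
def nuC {L : Type*} [Order.Coframe L] (C : Set L) (l : L) : L :=
  sInf {c | c ∈ C ∧ l ≤ c}

section

variable {L : Type*} [Order.Coframe L] {C : Set L}

theorem le_nuC (l : L) : l ≤ nuC C l :=
  le_sInf fun _ hc => hc.2

theorem nuC_le_iff (l : L) {c : L} (hc : c ∈ C) : nuC C l ≤ c ↔ l ≤ c :=
  ⟨(le_nuC l).trans, fun h => sInf_le ⟨hc, h⟩⟩

theorem nuC_mono : Monotone (nuC C) := fun _ _ h =>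
  sInf_le_sInf fun _ hc => ⟨hc.1, h.trans hc.2⟩

theorem nuC_of_mem {c : L} (hc : c ∈ C) : nuC C c = c :=
  le_antisymm ((nuC_le_iff c hc).2 le_rfl) (le_nuC c)

theorem nuC_idem (l : L) : nuC C (nuC C l) = nuC C l :=
  le_antisymm (le_sInf fun _ hc => (nuC_le_iff _ hc.1).2 ((nuC_le_iff l hc.1).2 hc.2)) (le_nuC _)

/-- By the coframe law, the right-hand side is the infimum of all `c ⊔ d` with `c, d ∈ C`, `a ≤ c` and
`b ≤ d`; each such `c ⊔ d` belongs to `C` and bounds `a ⊔ b`. -/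
theorem nuC_sup (hsup : ∀ c ∈ C, ∀ d ∈ C, c ⊔ d ∈ C) (a b : L) :
    nuC C (a ⊔ b) = nuC C a ⊔ nuC C b := by
  refine le_antisymm ?_ (sup_le (nuC_mono le_sup_left) (nuC_mono le_sup_right))
  change _ ≤ sInf {c | c ∈ C ∧ a ≤ c} ⊔ sInf {d | d ∈ C ∧ b ≤ d}
  rw [sInf_sup_sInf]
  exact le_iInf₂ fun p hp =>
    sInf_le ⟨hsup _ hp.1.1 _ hp.2.1, sup_le_sup hp.1.2 hp.2.2⟩

theorem nuC_eq_sInf_cmpl (hcmpl : ∀ c ∈ C, Cmpl c) (l : L) :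
    nuC C l = sInf {x | ∃ a : L, Cmpl a ∧ l ≤ a ∧ x = nuC C a} := by
  apply le_antisymm
  · refine le_sInf ?_
    rintro _ ⟨a, -, hla, rfl⟩
    exact nuC_mono hla
  · exact le_sInf fun c hc => sInf_le ⟨c, hcmpl c hc.1, hc.2, (nuC_of_mem hc.1).symm⟩

end

/-- A topological structure on a coframe `L` (a sublattice `C` of complemented elements,
containing `⊥` and `⊤`, closed under finite suprema and infima) induces an adherence
structure `ν_C`, which is centered, idempotent, and fixes the elements of `C`. -/
theorem stmt19 {L : Type*} [Order.Coframe L] (C : Set L)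
    (hcmpl : ∀ c ∈ C, Cmpl c)
    (hbot : (⊥ : L) ∈ C) (htop : (⊤ : L) ∈ C)
    (hsup : ∀ c ∈ C, ∀ d ∈ C, c ⊔ d ∈ C)
    (hinf : ∀ c ∈ C, ∀ d ∈ C, c ⊓ d ∈ C) :
    -- ν_C is an adherence structure
    IsAdhStruct (nuC C) ∧
    -- (1) ν_C is centered
    (∀ l : L, l ≤ nuC C l) ∧
    -- (2) for every ℓ and c ∈ C, ν_C ℓ ≤ c iff ℓ ≤ c
    (∀ l : L, ∀ c ∈ C, (nuC C l ≤ c ↔ l ≤ c)) ∧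
    -- (3) ν_C fixes the elements of C
    (∀ c ∈ C, nuC C c = c) ∧
    -- (4) ν_C is idempotent
    (∀ l : L, nuC C (nuC C l) = nuC C l) := by
  exact ⟨⟨nuC_mono, nuC_of_mem hbot, fun a b _ _ => nuC_sup hsup a b, nuC_eq_sInf_cmpl hcmpl⟩,
    le_nuC, fun l _ hc => nuC_le_iff l hc, fun _ hc => nuC_of_mem hc, nuC_idem⟩
end
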